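/- Let μ ∈ M¹₊(Ω). If μ is a good measure relative to g for every continuous nondecreasing function g : ℝ → ℝ vanishing on (−∞, 0], then μ is absolutely continuous with respect to Lebesgue measure, i.e., μ ∈ L¹_ρ(Ω): there exists f ∈ L¹(Ω, ρ(x) dx) with dμ = f dx. -/

import Mathlib

open MeasureTheory Set Filter Topology
open scoped ENNReal NNReal

noncomputable section

/-- Euclidean space `ℝ^N`. -/
abbrev Euc (N : ℕ) : Type := EuclideanSpace ℝ (Fin N)

/-- `ρ(x) = dist(x, ∂Ω)`, realized as the distance from `x` to the complement of `Ω`. -/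
def rho {N : ℕ} (Ω : Set (Euc N)) (x : Euc N) : ℝ := Metric.infDist x Ωᶜ

/-- The Laplacian (in the space variable) of `f : ℝ^N → ℝ`. -/
def lap {N : ℕ} (f : Euc N → ℝ) (x : Euc N) : ℝ :=
  ∑ i : Fin N, fderiv ℝ (fun y => fderiv ℝ f y (EuclideanSpace.single i 1)) x
    (EuclideanSpace.single i 1)

/-- The parabolic cylinder `Q_T = Ω × (0,T)`. -/
def QT {N : ℕ} (Ω : Set (Euc N)) (T : ℝ) : Set (Euc N × ℝ) := Ω ×ˢ Ioo 0 T

/-- `∂_t ζ + Δ ζ` for a function `ζ(x,t)` (curried). -/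
def heatAdj {N : ℕ} (ζ : Euc N → ℝ → ℝ) (p : Euc N × ℝ) : ℝ :=
  deriv (ζ p.1) p.2 + lap (fun y => ζ y p.2) p.1

/-- `C^{2,1}` regularity: `ζ`, `∂_t ζ`, `∇_x ζ` and `D²_x ζ` exist and are continuous. -/
def C21 {N : ℕ} (ζ : Euc N → ℝ → ℝ) : Prop :=
  Continuous (fun p : Euc N × ℝ => ζ p.1 p.2) ∧
  (∀ (x : Euc N) (t : ℝ), DifferentiableAt ℝ (ζ x) t) ∧
  Continuous (fun p : Euc N × ℝ => deriv (ζ p.1) p.2) ∧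
  (∀ (t : ℝ) (x : Euc N), DifferentiableAt ℝ (fun y => ζ y t) x) ∧
  Continuous (fun p : Euc N × ℝ => fderiv ℝ (fun y => ζ y p.2) p.1) ∧
  (∀ (t : ℝ) (x : Euc N), DifferentiableAt ℝ (fun y => fderiv ℝ (fun z => ζ z t) y) x) ∧
  Continuous (fun p : Euc N × ℝ => fderiv ℝ (fun y => fderiv ℝ (fun z => ζ z p.2) y) p.1)

/-- Membership in `C^{2,1}_{ℓ,0}(Q̄_T)` : `C^{2,1}` regularity together with
vanishing on `∂Ω × [0,T] ∪ Ω̄ × {T}`. -/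
def TestZero {N : ℕ} (Ω : Set (Euc N)) (T : ℝ) (ζ : Euc N → ℝ → ℝ) : Prop :=
  C21 ζ ∧ (∀ x ∈ frontier Ω, ∀ t ∈ Icc (0:ℝ) T, ζ x t = 0) ∧
  (∀ x ∈ closure Ω, ζ x T = 0)

/-- `g : ℝ → ℝ` continuous, nondecreasing and vanishing on `(-∞,0]`. -/
def GoodG (g : ℝ → ℝ) : Prop := Continuous g ∧ Monotone g ∧ ∀ r : ℝ, r ≤ 0 → g r = 0

/-- `μ ∈ M¹₊(Ω)` : a positive Radon measure on `Ω` with `∫_Ω ρ dμ < ∞`. -/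
def MemM1 {N : ℕ} (Ω : Set (Euc N)) (μ : Measure (Euc N)) : Prop :=
  μ Ωᶜ = 0 ∧ (∀ K : Set (Euc N), K ⊆ Ω → IsCompact K → μ K < ⊤) ∧
  (∫⁻ x, ENNReal.ofReal (rho Ω x) ∂μ) < ⊤

/-- A positive Radon measure on the (open) set `U`. -/
def RadonOn {N : ℕ} (U : Set (Euc N)) (ν : Measure (Euc N)) : Prop :=
  ν Uᶜ = 0 ∧ ∀ K : Set (Euc N), K ⊆ U → IsCompact K → ν K < ⊤

/-- Weak solution of `(P_μ)` : `∂_t u - Δu + g(u) = 0` in `Q_T`, `u = 0` on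
`∂Ω × (0,T)`, `u(·,0) = μ`. -/
def WeakSol {N : ℕ} (Ω : Set (Euc N)) (T : ℝ) (g : ℝ → ℝ) (μ : Measure (Euc N))
    (u : Euc N × ℝ → ℝ) : Prop :=
  IntegrableOn u (QT Ω T) ∧
  IntegrableOn (fun p => g (u p) * rho Ω p.1) (QT Ω T) ∧
  ∀ ζ : Euc N → ℝ → ℝ, TestZero Ω T ζ →
    (∫ p in QT Ω T,
      (-(u p) * deriv (ζ p.1) p.2 - u p * lap (fun y => ζ y p.2) p.1 + ζ p.1 p.2 * g (u p)))
      = ∫ x, ζ x 0 ∂μ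

/-- Weak subsolution of `(P_μ)`. -/
def WeakSubSol {N : ℕ} (Ω : Set (Euc N)) (T : ℝ) (g : ℝ → ℝ) (μ : Measure (Euc N))
    (u : Euc N × ℝ → ℝ) : Prop :=
  IntegrableOn u (QT Ω T) ∧
  IntegrableOn (fun p => g (u p) * rho Ω p.1) (QT Ω T) ∧
  ∀ ζ : Euc N → ℝ → ℝ, TestZero Ω T ζ → (∀ x t, 0 ≤ ζ x t) →
    (∫ p in QT Ω T,
      (-(u p) * deriv (ζ p.1) p.2 - u p * lap (fun y => ζ y p.2) p.1 + ζ p.1 p.2 * g (u p)))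
      ≤ ∫ x, ζ x 0 ∂μ

/-- `μ` is a good measure relative to `g` : `(P_μ)` admits a weak solution. -/
def GoodMeasure {N : ℕ} (Ω : Set (Euc N)) (T : ℝ) (g : ℝ → ℝ) (μ : Measure (Euc N)) : Prop :=
  ∃ u, WeakSol Ω T g μ u

/-- Essential limit of `F(t)` as `t → 0⁺` equals `L`. -/
def EssLimInit (F : ℝ → ℝ) (L : ℝ) : Prop :=
  Tendsto F ((𝓝[>] (0:ℝ)) ⊓ (ae (volume : Measure ℝ))) (𝓝 L)

/-- Essential limit of `F(t)` as `t → 0⁺` is `+∞`. -/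
def EssLimInitTop (F : ℝ → ℝ) : Prop :=
  Tendsto F ((𝓝[>] (0:ℝ)) ⊓ (ae (volume : Measure ℝ))) atTop

/-- `ν` is the initial trace of `u` on `U ⊆ Ω` : for every `φ ∈ C_c(U)`,
`ess lim_{t→0} ∫_Ω u(·,t) φ dx = ∫ φ dν`. -/
def InitTraceOn {N : ℕ} (Ω U : Set (Euc N)) (u : Euc N × ℝ → ℝ) (ν : Measure (Euc N)) : Prop :=
  ∀ φ : Euc N → ℝ, Continuous φ → HasCompactSupport φ → tsupport φ ⊆ U →
    EssLimInit (fun t => ∫ x in Ω, u (x, t) * φ x) (∫ x, φ x ∂ν)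

/-- `μstar` is the reduced measure of `μ` : the largest good measure `≤ μ`. -/
def IsReducedMeasure {N : ℕ} (Ω : Set (Euc N)) (T : ℝ) (g : ℝ → ℝ)
    (μ μstar : Measure (Euc N)) : Prop :=
  MemM1 Ω μstar ∧ μstar ≤ μ ∧ GoodMeasure Ω T g μstar ∧
  ∀ ν : Measure (Euc N), MemM1 Ω ν → GoodMeasure Ω T g ν → ν ≤ μ → ν ≤ μstar

/-- The `N`-dimensional Hausdorff measure on `ℝ^N`. -/
def hausN {N : ℕ} : Measure (Euc N) := MeasureTheory.Measure.hausdorffMeasure (N : ℝ)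

lemma aux_exists_g (M : ℕ → ℝ) (hM : ∀ n, 0 ≤ M n) :
    ∃ g : ℝ → ℝ, GoodG g ∧ (∀ r, 0 ≤ g r) ∧ ∀ n : ℕ, ∀ r : ℝ, (n:ℝ) + 1 ≤ r → M n * r ≤ g r := by
  set a : ℕ → ℝ → ℝ := fun i r => M i * max 0 (min 1 (r - i)) with ha
  have ha0 : ∀ i r, 0 ≤ a i r := fun i r => mul_nonneg (hM i) (le_max_left _ _)
  have haz : ∀ (i : ℕ) (r : ℝ), r ≤ i → a i r = 0 := by
    intro i r h
    have : min 1 (r - i) ≤ 0 := (min_le_right _ _).trans (by linarith)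
    simp [ha, max_eq_left this]
  have hfin : ∀ r, (Function.support fun i => a i r).Finite := by
    intro r
    refine (Set.finite_lt_nat (⌈r⌉₊)).subset ?_
    intro i hi
    by_contra h
    simp only [Set.mem_ofPred_eq, not_lt] at h
    exact hi (haz i r ((Nat.le_ceil r).trans (by exact_mod_cast h)))
  have hcont : Continuous fun r => ∑ᶠ i, a i r := by
    refine continuous_finsum (fun i => by simp only [ha]; fun_prop) ?_
    intro r
    refine ⟨Iio (r+1), Iio_mem_nhds (by linarith), ?_⟩
    refine (Set.finite_lt_nat (⌈r+1⌉₊)).subset ?_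
    rintro i ⟨s, hs, hs'⟩
    by_contra h
    simp only [Set.mem_ofPred_eq, not_lt] at h
    refine hs (haz i s ?_)
    have h1 : (⌈r+1⌉₊ : ℝ) ≤ i := by exact_mod_cast h
    have h2 := Nat.le_ceil (r+1)
    have h3 : s < r + 1 := hs'
    linarith
  have hnn : ∀ r, 0 ≤ ∑ᶠ i, a i r := fun r => finsum_nonneg (fun i => ha0 i r)
  have hmono : Monotone fun r => ∑ᶠ i, a i r := by
    intro r s hrs
    refine finsum_le_finsum' (hfin r) (hfin s) ?_
    intro i
    simp only [ha]
    gcongr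
    exact hM i
  refine ⟨fun r => max r 0 * ∑ᶠ i, a i r, ⟨by fun_prop, ?_, ?_⟩, ?_, ?_⟩
  · intro r s hrs
    have h1 : max r 0 ≤ max s 0 := max_le_max hrs le_rfl
    exact mul_le_mul h1 (hmono hrs) (hnn r) (le_max_right _ _)
  · intro r hr
    simp [max_eq_right hr]
  · intro r
    exact mul_nonneg (le_max_right _ _) (hnn r)
  · intro n r hr
    have hr0 : 0 ≤ r := by have := n.cast_nonneg (α := ℝ); linarith
    have h1 : a n r = M n := by
      have h2 : min 1 (r - n) = 1 := min_eq_left (by linarith)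
      simp [ha, h2]
    have h3 : a n r ≤ ∑ᶠ i, a i r := single_le_finsum n (hfin r) (fun i => ha0 i r)
    simp only [max_eq_left hr0]
    rw [h1] at h3
    nlinarith

lemma aux_cutoff {N : ℕ} {K U : Set (Euc N)} (hK : IsCompact K) (hU : IsOpen U) (hKU : K ⊆ U) :
    ∃ (φ : Euc N → ℝ) (L V : Set (Euc N)), IsCompact L ∧ L ⊆ U ∧ ContDiff ℝ 2 φ ∧
      (∀ x, 0 ≤ φ x ∧ φ x ≤ 1) ∧ (∀ x ∉ L, φ x = 0) ∧ IsOpen V ∧ K ⊆ V ∧ ∀ x ∈ V, φ x = 1 := by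
  obtain ⟨L, hL, hKL, hLU⟩ := exists_compact_between hK hU hKU
  obtain ⟨L', hL', hKL', hLU'⟩ := exists_compact_between hK isOpen_interior hKL
  obtain ⟨f, hf, hf1, hf2, hf3⟩ := exists_contMDiff_support_eq_eq_one_iff (n := (2 : ℕ∞))
    (modelWithCornersSelf ℝ (Euc N)) isOpen_interior hL'.isClosed hLU'
  refine ⟨f, L, interior L', hL, hLU, contMDiff_iff_contDiff.1 hf, ?_, ?_, isOpen_interior, hKL', ?_⟩
  · intro x
    exact hf1 (mem_range_self x)
  · intro x hx
    have : x ∉ Function.support f := by rw [hf2]; exact fun h => hx (interior_subset h)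
    simpa using this
  · intro x hx
    exact (hf3 x).1 (interior_subset hx)

lemma aux_lap_zero {N : ℕ} {φ : Euc N → ℝ} {L : Set (Euc N)} (hL : IsClosed L)
    (h : ∀ x ∉ L, φ x = 0) (x : Euc N) (hx : x ∉ L) : lap φ x = 0 := by
  have h0 : φ =ᶠ[𝓝 x] fun _ => 0 := by
    filter_upwards [hL.isOpen_compl.mem_nhds hx] with y hy using h y hy
  unfold lap
  refine Finset.sum_eq_zero fun i _ => ?_
  have h1 : (fun y => fderiv ℝ φ y (EuclideanSpace.single i 1)) =ᶠ[𝓝 x] fun _ => 0 := by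
    filter_upwards [h0.eventuallyEq_nhds] with y hy
    rw [hy.fderiv_eq]; simp
  rw [h1.fderiv_eq]; simp

lemma aux_lap_cont {N : ℕ} {φ : Euc N → ℝ} (hφ : ContDiff ℝ 2 φ) : Continuous (lap φ) := by
  unfold lap
  refine continuous_finsetSum _ fun i _ => ?_
  have h1 : ContDiff ℝ 1 (fderiv ℝ φ) := hφ.fderiv_right (by norm_num)
  have h2 : ContDiff ℝ 1 (fun y => fderiv ℝ φ y (EuclideanSpace.single i 1)) :=
    h1.clm_apply contDiff_const
  exact (h2.continuous_fderiv (by norm_num)).clm_apply continuous_const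

lemma aux_lap_bdd {N : ℕ} {φ : Euc N → ℝ} {L : Set (Euc N)} (hφ : ContDiff ℝ 2 φ) (hL : IsCompact L)
    (h : ∀ x ∉ L, φ x = 0) : ∃ C, 0 ≤ C ∧ ∀ x, |lap φ x| ≤ C := by
  obtain ⟨C, hC⟩ := hL.exists_bound_of_continuousOn (aux_lap_cont hφ).continuousOn
  refine ⟨max C 0, le_max_right _ _, fun x => ?_⟩
  by_cases hx : x ∈ L
  · exact (hC x hx).trans (le_max_left _ _)
  · rw [aux_lap_zero hL.isClosed h x hx]; simp

lemma aux_lap_lin {N : ℕ} {φ χ : Euc N → ℝ} (hφ : ContDiff ℝ 2 φ) (hχ : ContDiff ℝ 2 χ)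
    (δ c : ℝ) (x : Euc N) :
    lap (fun y => (φ y + δ * χ y) * c) x = (lap φ x + δ * lap χ x) * c := by
  have h1 : ContDiff ℝ 1 (fderiv ℝ φ) := hφ.fderiv_right (by norm_num)
  have h2 : ContDiff ℝ 1 (fderiv ℝ χ) := hχ.fderiv_right (by norm_num)
  have d1 : Differentiable ℝ φ := hφ.differentiable (by norm_num)
  have d2 : Differentiable ℝ χ := hχ.differentiable (by norm_num)
  unfold lap
  rw [Finset.mul_sum, ← Finset.sum_add_distrib, Finset.sum_mul]
  refine Finset.sum_congr rfl fun i _ => ?_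
  set e : Euc N := EuclideanSpace.single i 1
  have e1 : DifferentiableAt ℝ (fun y => fderiv ℝ φ y e) x :=
    ((h1.clm_apply contDiff_const).differentiable (by norm_num)) x
  have e2 : DifferentiableAt ℝ (fun y => fderiv ℝ χ y e) x :=
    ((h2.clm_apply contDiff_const).differentiable (by norm_num)) x
  have h3 : ∀ y, fderiv ℝ (fun y => (φ y + δ * χ y) * c) y e
      = (fderiv ℝ φ y e + δ * fderiv ℝ χ y e) * c := by
    intro y
    rw [(((d1 y).hasFDerivAt.fun_add ((d2 y).hasFDerivAt.const_mul δ)).mul_const c).fderiv]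
    simp
    ring
  simp only [h3]
  rw [((e1.hasFDerivAt.fun_add (e2.hasFDerivAt.const_mul δ)).mul_const c).fderiv]
  simp
  ring

def auxm (τ t : ℝ) : ℝ := max (1 - t / τ) 0

lemma aux_sq_deriv (s : ℝ) : HasDerivAt (fun s : ℝ => (max s 0)^2) (2 * max s 0) s := by
  rcases lt_trichotomy s 0 with h | h | h
  · have : (fun s : ℝ => (max s 0)^2) =ᶠ[𝓝 s] fun _ => 0 := by
      filter_upwards [Iio_mem_nhds h] with y hy
      simp [max_eq_right (le_of_lt (mem_Iio.1 hy))]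
    rw [max_eq_right h.le, mul_zero]
    exact (hasDerivAt_const s (0:ℝ)).congr_of_eventuallyEq this
  · subst h
    have : HasFDerivAt (fun s : ℝ => (max s 0)^2) (0 : ℝ →L[ℝ] ℝ) 0 := by
      refine Asymptotics.IsBigO.hasFDerivAt (n := 2) ?_ (by norm_num)
      refine Asymptotics.IsBigO.of_bound 1 (Eventually.of_forall fun y => ?_)
      simp only [Real.norm_eq_abs, abs_pow, sub_zero, abs_abs, one_mul]
      rw [abs_of_nonneg (le_max_right _ _)]
      refine pow_le_pow_left₀ (le_max_right _ _) ?_ 2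
      exact max_le (le_abs_self _) (abs_nonneg _)
    simpa using this.hasDerivAt
  · have : (fun s : ℝ => (max s 0)^2) =ᶠ[𝓝 s] fun s => s^2 := by
      filter_upwards [Ioi_mem_nhds h] with y hy
      simp only [max_eq_left (le_of_lt (mem_Ioi.1 hy))]
    rw [max_eq_left h.le]
    simpa using (hasDerivAt_pow 2 s).congr_of_eventuallyEq this

lemma auxm_deriv (τ t c : ℝ) :
    HasDerivAt (fun t => c * auxm τ t ^ 2) (-(2 / τ) * c * auxm τ t) t := by
  have h1 : HasDerivAt (fun t : ℝ => 1 - t / τ) (-(1/τ)) t := by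
    simpa using ((hasDerivAt_id t).div_const τ).const_sub 1
  have h2 := ((aux_sq_deriv (1 - t/τ)).comp t h1).const_mul c
  refine h2.congr_deriv ?_
  unfold auxm; ring

lemma auxm_cont (τ : ℝ) : Continuous (auxm τ) := by unfold auxm; fun_prop

lemma aux_C21 {N : ℕ} {ψ : Euc N → ℝ} (hψ : ContDiff ℝ 2 ψ) (τ : ℝ) :
    C21 (fun x t => ψ x * auxm τ t ^ 2) := by
  have h1 : ContDiff ℝ 1 (fderiv ℝ ψ) := hψ.fderiv_right (by norm_num)
  have d1 : Differentiable ℝ ψ := hψ.differentiable (by norm_num)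
  have d2 : Differentiable ℝ (fderiv ℝ ψ) := h1.differentiable (by norm_num)
  have c0 := hψ.continuous
  have c1 := h1.continuous
  have c2 := h1.continuous_fderiv (by norm_num)
  have cm := auxm_cont τ
  have f1 : ∀ (c : ℝ) (x : Euc N), fderiv ℝ (fun y => ψ y * c) x = c • fderiv ℝ ψ x :=
    fun c x => ((d1 x).hasFDerivAt.mul_const c).fderiv
  have f2 : ∀ (c : ℝ) (x : Euc N), fderiv ℝ (fun y => c • fderiv ℝ ψ y) x
      = c • fderiv ℝ (fderiv ℝ ψ) x :=
    fun c x => ((d2 x).hasFDerivAt.const_smul c).fderiv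
  refine ⟨by fun_prop, fun x t => (auxm_deriv τ t _).differentiableAt, ?_, ?_, ?_, ?_, ?_⟩
  · simp only [(auxm_deriv τ _ _).deriv]
    fun_prop
  · intro t x
    exact (d1 x).mul_const _
  · simp only [f1]
    exact ((cm.comp continuous_snd).pow 2).smul (c1.comp continuous_fst)
  · intro t x
    simp only [f1]
    exact (d2 x).const_smul (auxm τ t ^ 2)
  · simp only [f1, f2]
    exact ((cm.comp continuous_snd).pow 2).smul (c2.comp continuous_fst)

lemma aux_alg {u g ψ m lφ lχ δ τ k C : ℝ} (hτ : 0 < τ) (hk : 0 ≤ k) (hψ0 : 0 ≤ ψ) (hψ2 : ψ ≤ 2)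
    (hm0 : 0 ≤ m) (hm1 : m ≤ 1) (hδ : 0 ≤ δ) (hlφ : τ * |lφ| ≤ ψ) (hlχ : |lχ| ≤ C)
    (hg0 : 0 ≤ g) (hg : k ≤ u → 6 / τ * u ≤ g) :
    -u * (-(2 / τ) * ψ * m) - u * ((lφ + δ * lχ) * m ^ 2) + ψ * m ^ 2 * g
      ≤ δ * C * |u| + 3 * g + 3 * k / τ * ψ := by
  have hl : |lφ| ≤ ψ / τ := by rw [le_div_iff₀ hτ]; linarith
  set q := ψ / τ with hq
  have hq0 : 0 ≤ q := div_nonneg hψ0 hτ.le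
  have hq2 : q ≤ 2 / τ := by rw [hq]; gcongr
  have hl1 := abs_le.1 hl
  have hmm : m ^ 2 ≤ m := by nlinarith
  have hmm0 : 0 ≤ m ^ 2 := sq_nonneg m
  have hA0 : 0 ≤ 2 * q * m - lφ * m ^ 2 := by nlinarith
  have hA1 : 2 * q * m - lφ * m ^ 2 ≤ 3 * q := by nlinarith
  have h1 : u * (2 * q * m - lφ * m ^ 2) ≤ 3 * k * q + g := by
    rcases le_total u k with h | h
    · have : u * (2 * q * m - lφ * m ^ 2) ≤ k * (3 * q) :=
        (mul_le_mul_of_nonneg_right h hA0).trans (mul_le_mul_of_nonneg_left hA1 hk)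
      linarith
    · have hu : 0 ≤ u := hk.trans h
      have h2 : u * (2 * q * m - lφ * m ^ 2) ≤ u * (3 * (2 / τ)) :=
        mul_le_mul_of_nonneg_left (hA1.trans (by linarith)) hu
      have h3 := hg h
      have h4 : u * (3 * (2 / τ)) = 6 / τ * u := by ring
      have h5 : 0 ≤ 3 * k * q := by positivity
      linarith
  have h2 : -(u * (δ * lχ * m ^ 2)) ≤ δ * C * |u| := by
    calc -(u * (δ * lχ * m ^ 2)) ≤ |u * (δ * lχ * m ^ 2)| := neg_le_abs _
      _ = |u| * (δ * |lχ| * m ^ 2) := by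
        rw [abs_mul, abs_mul, abs_mul, abs_of_nonneg hδ, abs_of_nonneg hmm0]
      _ ≤ |u| * (δ * C * 1) := by
        have : 0 ≤ C := (abs_nonneg _).trans hlχ
        gcongr
        linarith
      _ = _ := by ring
  have h3 : ψ * m ^ 2 * g ≤ 2 * g := by
    refine mul_le_mul_of_nonneg_right ?_ hg0
    nlinarith
  have e1 : -u * (-(2 / τ) * ψ * m) - u * ((lφ + δ * lχ) * m ^ 2) + ψ * m ^ 2 * g
     = u * (2 * q * m - lφ * m ^ 2) + -(u * (δ * lχ * m ^ 2)) + ψ * m ^ 2 * g := by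
    rw [hq]; ring
  have e2 : 3 * k / τ * ψ = 3 * k * q := by rw [hq]; ring
  rw [e1, e2]; linarith

lemma aux_rho_pos {N : ℕ} (hN : 1 ≤ N) {Ω : Set (Euc N)} (hΩo : IsOpen Ω)
    (hΩb : Bornology.IsBounded Ω) : ∀ x ∈ Ω, 0 < rho Ω x := by
  intro x hx
  have hne : (Ωᶜ).Nonempty := by
    rw [Set.nonempty_compl]
    rintro rfl
    have : Nonempty (Fin N) := ⟨⟨0, hN⟩⟩
    exact NormedSpace.unbounded_univ ℝ (Euc N) hΩb
  exact (hΩo.isClosed_compl.notMem_iff_infDist_pos hne).1 (by simpa using hx)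

lemma aux_key {N : ℕ} (hN : 1 ≤ N) (Ω : Set (Euc N)) (hΩo : IsOpen Ω)
    (hΩb : Bornology.IsBounded Ω) (T : ℝ) (hT : 0 < T)
    (μ : Measure (Euc N)) (hμ : MemM1 Ω μ)
    (hgood : ∀ g : ℝ → ℝ, GoodG g → GoodMeasure Ω T g μ)
    (K : Set (Euc N)) (hK : IsCompact K) (hKΩ : K ⊆ Ω) (hK0 : volume K = 0) : μ K = 0 := by
  obtain ⟨χ, S, V, hS, hSΩ, hχ, hχ01, hχS, hV, hKV, hχV⟩ := aux_cutoff hK hΩo hKΩ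
  obtain ⟨C, hC0, hC⟩ := aux_lap_bdd hχ hS hχS
  obtain ⟨c, hc0, hc⟩ := hS.exists_forall_le' (f := rho Ω) (a := 0)
    (Metric.continuous_infDist_pt _).continuousOn
    (fun x hx => aux_rho_pos hN hΩo hΩb x (hSΩ hx))
  set δ : ℕ → ℝ := fun n => 1 / ((n:ℝ) + 1) ^ 2 with hδ
  have hδ0 : ∀ n, 0 < δ n := fun n => by simp only [hδ]; positivity
  have hδ1 : ∀ n, δ n ≤ 1 := fun n => by
    simp only [hδ]
    rw [div_le_one (by positivity)]
    have : (0:ℝ) ≤ n := n.cast_nonneg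
    nlinarith
  have hex : ∀ n : ℕ, ∃ (φ : Euc N → ℝ) (L : Set (Euc N)) (τ : ℝ), IsCompact L ∧ L ⊆ V ∧
      volume L ≤ ENNReal.ofReal (δ n) ∧ ContDiff ℝ 2 φ ∧ (∀ x, 0 ≤ φ x ∧ φ x ≤ 1) ∧
      (∀ x ∉ L, φ x = 0) ∧ (∀ x ∈ K, φ x = 1) ∧ 0 < τ ∧ τ ≤ T ∧ τ ≤ 1 / ((n:ℝ) + 1) ∧
      ∀ x, τ * |lap φ x| ≤ δ n := by
    intro n
    obtain ⟨U, hKU, hU, hUδ⟩ := Set.exists_isOpen_lt_of_lt (μ := volume) K (ENNReal.ofReal (δ n))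
      (by rw [hK0]; simpa using hδ0 n)
    obtain ⟨φ, L, W, hL, hLU, hφ, hφ01, hφL, hW, hKW, hφW⟩ :=
      aux_cutoff hK (hU.inter hV) (subset_inter hKU hKV)
    obtain ⟨D, hD0, hD⟩ := aux_lap_bdd hφ hL hφL
    refine ⟨φ, L, min T (min (1 / ((n:ℝ)+1)) (δ n / (D + 1))), hL, fun x hx => (hLU hx).2,
      (measure_mono fun x hx => (hLU hx).1).trans hUδ.le, hφ, hφ01, hφL,
      fun x hx => hφW x (hKW hx), ?_, min_le_left _ _,
      (min_le_right _ _).trans (min_le_left _ _), ?_⟩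
    · have := hδ0 n
      positivity
    · intro x
      calc _ ≤ δ n / (D + 1) * D := by
            have := hδ0 n
            refine mul_le_mul ((min_le_right _ _).trans (min_le_right _ _)) (hD x) (abs_nonneg _)
              (by positivity)
        _ ≤ δ n := by
            have := hδ0 n
            rw [div_mul_eq_mul_div, div_le_iff₀ (by positivity)]
            nlinarith
  choose φ L τ hL hLV hLδ hφ hφ01 hφL hφK hτ0 hτT hτn hτlap using hex
  have hLS : ∀ n, L n ⊆ S := by
    intro n x hx
    by_contra h
    have h1 := hχV x (hLV n hx)
    rw [hχS x h] at h1
    norm_num at h1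
  obtain ⟨g, hg, hg0, hgM⟩ := aux_exists_g (fun n => 6 / τ n)
    (fun n => div_nonneg (by norm_num) (hτ0 n).le)
  obtain ⟨u, hu, hgu, hsol⟩ := hgood g hg
  have hΩm : MeasurableSet Ω := hΩo.measurableSet
  have hQ : MeasurableSet (QT Ω T) := hΩm.prod measurableSet_Ioo
  have hSm := hS.isClosed.measurableSet
  -- the localized nonlinear term
  set G : Euc N × ℝ → ℝ := (S ×ˢ (univ : Set ℝ)).indicator (fun p => g (u p)) with hG
  have hG0 : ∀ p, 0 ≤ G p := fun p => indicator_nonneg (fun _ _ => hg0 _) p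
  have hGi : IntegrableOn G (QT Ω T) := by
    refine Integrable.mono' (hgu.norm.const_mul (1 / c)) ?_ ?_
    · exact (hg.1.comp_aestronglyMeasurable hu.aestronglyMeasurable).indicator
        (hSm.prod MeasurableSet.univ)
    · refine Eventually.of_forall fun p => ?_
      rw [Real.norm_of_nonneg (hG0 p)]
      by_cases hp : p ∈ S ×ˢ (univ : Set ℝ)
      · simp only [hG, indicator_of_mem hp]
        have h1 := hc p.1 hp.1
        rw [norm_mul, Real.norm_of_nonneg (hg0 _), Real.norm_of_nonneg (hc0.le.trans h1),
          one_div, inv_mul_eq_div, le_div_iff₀ hc0]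
        exact mul_le_mul_of_nonneg_left h1 (hg0 _)
      · simp only [hG, indicator_of_notMem hp]
        positivity
  set H : ℕ → Euc N × ℝ → ℝ :=
    fun n => ((univ : Set (Euc N)) ×ˢ Iio (τ n)).indicator G with hH
  have hHm : ∀ n, MeasurableSet ((univ : Set (Euc N)) ×ˢ Iio (τ n)) :=
    fun n => MeasurableSet.univ.prod measurableSet_Iio
  have hHi : ∀ n, IntegrableOn (H n) (QT Ω T) := fun n => Integrable.indicator hGi (hHm n)
  have hH0 : ∀ n p, 0 ≤ H n p := fun n p => indicator_nonneg (fun _ _ => hG0 _) p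
  have hτlim : Tendsto τ atTop (𝓝 0) :=
    squeeze_zero (fun n => (hτ0 n).le) hτn tendsto_one_div_add_atTop_nhds_zero_nat
  have hHlim : Tendsto (fun n => ∫ p in QT Ω T, H n p) atTop (𝓝 0) := by
    have h0 : (0:ℝ) = ∫ p in QT Ω T, (0:ℝ) := by simp
    rw [h0]
    refine tendsto_integral_of_dominated_convergence G
      (fun n => (hHi n).aestronglyMeasurable) hGi ?_ ?_
    · intro n
      refine Eventually.of_forall fun p => ?_
      rw [Real.norm_of_nonneg (hH0 n p)]
      exact indicator_le_self' (fun _ _ => hG0 _) p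
    · filter_upwards [ae_restrict_mem hQ] with p hp
      refine tendsto_const_nhds.congr' ?_
      filter_upwards [hτlim.eventually (gt_mem_nhds hp.2.1)] with n hn
      simp only [hH]
      rw [indicator_of_notMem]
      rintro ⟨-, h⟩
      exact lt_asymm hn h
  set E1 : ℕ → Set (Euc N × ℝ) := fun n => L n ×ˢ Ioo 0 (τ n) with hE1
  set E2 : ℕ → Set (Euc N × ℝ) := fun n => S ×ˢ Ioo 0 (τ n) with hE2
  have hE1m : ∀ n, MeasurableSet (E1 n) := fun n =>
    (hL n).isClosed.measurableSet.prod measurableSet_Ioo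
  have hE2m : ∀ n, MeasurableSet (E2 n) := fun n => hSm.prod measurableSet_Ioo
  have hvE : ∀ (A : Set (Euc N)) (t : ℝ), 0 < t → volume.real (A ×ˢ Ioo 0 t) = volume.real A * t := by
    intro A t ht
    rw [Measure.real, Measure.volume_eq_prod, Measure.prod_prod, ENNReal.toReal_mul]
    simp [Measure.real, ht.le]
  have hfin : ∀ (A : Set (Euc N)) (t : ℝ), IsCompact A → volume (A ×ˢ Ioo 0 t) ≠ ⊤ := by
    intro A t hA
    rw [Measure.volume_eq_prod, Measure.prod_prod]
    exact ENNReal.mul_ne_top hA.measure_lt_top.ne (by simp)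
  have hI1 : ∀ n, Integrable ((E1 n).indicator (fun _ => (1:ℝ))) := fun n =>
    (integrable_indicator_iff (hE1m n)).2 (integrableOn_const (hfin _ _ (hL n)))
  have hI2 : ∀ n, Integrable ((E2 n).indicator (fun _ => (1:ℝ))) := fun n =>
    (integrable_indicator_iff (hE2m n)).2 (integrableOn_const (hfin _ _ hS))
  have hJ1 : ∀ n, ∫ p in QT Ω T, (E1 n).indicator (fun _ => (1:ℝ)) p ≤ δ n * τ n := by
    intro n
    refine (setIntegral_le_integral (hI1 n)
      (Eventually.of_forall fun p => indicator_nonneg (fun _ _ => zero_le_one) p)).trans ?_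
    rw [integral_indicator (hE1m n), setIntegral_const, smul_eq_mul, mul_one, hE1, hvE _ _ (hτ0 n)]
    refine mul_le_mul_of_nonneg_right ?_ (hτ0 n).le
    exact ENNReal.toReal_le_of_le_ofReal (hδ0 n).le (hLδ n)
  have hJ2 : ∀ n, ∫ p in QT Ω T, (E2 n).indicator (fun _ => (1:ℝ)) p ≤ volume.real S * τ n := by
    intro n
    refine (setIntegral_le_integral (hI2 n)
      (Eventually.of_forall fun p => indicator_nonneg (fun _ _ => zero_le_one) p)).trans ?_
    rw [integral_indicator (hE2m n), setIntegral_const, smul_eq_mul, mul_one, hE2, hvE _ _ (hτ0 n)]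
  -- test functions
  set ψ : ℕ → Euc N → ℝ := fun n x => φ n x + δ n * χ x with hψ
  have hψc : ∀ n, ContDiff ℝ 2 (ψ n) := fun n => (hφ n).add (contDiff_const.mul hχ)
  have hψS : ∀ n, ∀ x ∉ S, ψ n x = 0 := by
    intro n x hx
    simp only [hψ, hχS x hx, hφL n x (fun h => hx (hLS n h))]
    ring
  have hψ0 : ∀ n x, 0 ≤ ψ n x := fun n x =>
    add_nonneg (hφ01 n x).1 (mul_nonneg (hδ0 n).le (hχ01 x).1)
  have hψ2 : ∀ n x, ψ n x ≤ 2 := fun n x => by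
    have h1 := (hφ01 n x).2
    have h2 := mul_le_mul (hδ1 n) (hχ01 x).2 (hχ01 x).1 zero_le_one
    simp only [hψ]; linarith
  have hlapψ : ∀ n x, τ n * |lap (φ n) x| ≤ ψ n x := by
    intro n x
    by_cases hx : x ∈ L n
    · refine (hτlap n x).trans ?_
      simp only [hψ, hχV x (hLV n hx)]
      linarith [(hφ01 n x).1]
    · rw [aux_lap_zero (hL n).isClosed (hφL n) x hx]
      simpa using hψ0 n x
  have htest : ∀ n, TestZero Ω T (fun x t => ψ n x * auxm (τ n) t ^ 2) := by
    intro n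
    refine ⟨aux_C21 (hψc n) (τ n), ?_, ?_⟩
    · intro x hx t _
      have : x ∉ S := fun h => by
        have h1 : x ∈ Ω ∩ frontier Ω := ⟨hSΩ h, hx⟩
        rw [hΩo.inter_frontier_eq] at h1
        exact h1
      simp [hψS n x this]
    · intro x _
      have h1 : 1 - T / τ n ≤ 0 := by
        have := (one_le_div (hτ0 n)).2 (hτT n)
        linarith
      simp [auxm, max_eq_right h1]
  set B : ℕ → Euc N × ℝ → ℝ := fun n p => δ n * C * |u p| + 3 * H n p + 3 * ((n:ℝ) + 1) / τ n *
    ((E1 n).indicator (fun _ => (1:ℝ)) p + δ n * (E2 n).indicator (fun _ => (1:ℝ)) p) with hB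
  have hB0 : ∀ n p, 0 ≤ B n p := by
    intro n p
    have h1 := hH0 n p
    have h2 : 0 ≤ (E1 n).indicator (fun _ => (1:ℝ)) p := indicator_nonneg (fun _ _ => zero_le_one) p
    have h3 : 0 ≤ (E2 n).indicator (fun _ => (1:ℝ)) p := indicator_nonneg (fun _ _ => zero_le_one) p
    have h4 := hτ0 n
    have h5 := hδ0 n
    simp only [hB]
    positivity
  have hBi1 : ∀ n, IntegrableOn (fun p => δ n * C * |u p|) (QT Ω T) := fun n =>
    Integrable.const_mul hu.abs _
  have hBi2 : ∀ n, IntegrableOn (fun p => 3 * H n p) (QT Ω T) := fun n =>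
    Integrable.const_mul (hHi n) _
  have hBi3 : ∀ n, IntegrableOn (fun p => δ n * (E2 n).indicator (fun _ => (1:ℝ)) p) (QT Ω T) :=
    fun n => ((hI2 n).integrableOn).const_mul _
  have hBi4 : ∀ n : ℕ, IntegrableOn (fun p => 3 * ((n:ℝ) + 1) / τ n *
    ((E1 n).indicator (fun _ => (1:ℝ)) p + δ n * (E2 n).indicator (fun _ => (1:ℝ)) p)) (QT Ω T) :=
    fun n => Integrable.const_mul (((hI1 n).integrableOn).add (hBi3 n)) _
  have hBi : ∀ n, IntegrableOn (B n) (QT Ω T) := fun n =>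
    ((hBi1 n).add (hBi2 n)).add (hBi4 n)
  have hBint : ∀ n, ∫ p in QT Ω T, B n p ≤ δ n * C * (∫ p in QT Ω T, |u p|) +
      3 * (∫ p in QT Ω T, H n p) + 3 * (1 / ((n:ℝ) + 1)) * (1 + volume.real S) := by
    intro n
    simp only [hB]
    have h12 : IntegrableOn (fun p => δ n * C * |u p| + 3 * H n p) (QT Ω T) :=
      (hBi1 n).add (hBi2 n)
    rw [integral_add h12 (hBi4 n), integral_add (hBi1 n) (hBi2 n),
      integral_const_mul, integral_const_mul, integral_const_mul,
      integral_add (hI1 n).integrableOn (hBi3 n), integral_const_mul]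
    have h4 := hτ0 n
    have h5 := hδ0 n
    have h6 : 3 * ((n:ℝ) + 1) / τ n * (δ n * τ n + δ n * (volume.real S * τ n))
        = 3 * (1 / ((n:ℝ) + 1)) * (1 + volume.real S) := by
      simp only [hδ]
      field_simp
    rw [← h6]
    have := hJ1 n
    have := hJ2 n
    gcongr
  have hpt : ∀ n, ∀ p ∈ QT Ω T,
      -(u p) * deriv (fun t => ψ n p.1 * auxm (τ n) t ^ 2) p.2
        - u p * lap (fun y => ψ n y * auxm (τ n) p.2 ^ 2) p.1
        + ψ n p.1 * auxm (τ n) p.2 ^ 2 * g (u p) ≤ B n p := by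
    rintro n ⟨x, t⟩ ⟨hx, ht0, htT⟩
    simp only at hx ht0 htT ⊢
    rw [(auxm_deriv (τ n) t (ψ n x)).deriv]
    simp only [hψ]
    rw [aux_lap_lin (hφ n) hχ]
    change -u (x,t) * (-(2 / τ n) * ψ n x * auxm (τ n) t) - _ + ψ n x * _ * _ ≤ _
    by_cases hxS : x ∈ S
    · by_cases htτ : t < τ n
      · have hm0 : 0 ≤ auxm (τ n) t := le_max_right _ _
        have hm1 : auxm (τ n) t ≤ 1 := by
          have : 0 ≤ t / τ n := div_nonneg ht0.le (hτ0 n).le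
          exact max_le (by linarith) zero_le_one
        refine (aux_alg (k := (n:ℝ) + 1) (C := C) (hτ0 n) (by positivity) (hψ0 n x) (hψ2 n x) hm0 hm1
          (hδ0 n).le (hlapψ n x) (hC x) (hg0 (u (x,t))) (hgM n _)).trans ?_
        have e1 : H n (x, t) = g (u (x, t)) := by
          simp only [hH, hG]
          rw [indicator_of_mem (by exact ⟨mem_univ _, htτ⟩),
            indicator_of_mem (by exact ⟨hxS, mem_univ _⟩)]
        have e2 : (E2 n).indicator (fun _ => (1:ℝ)) (x,t) = 1 :=
          indicator_of_mem (by exact ⟨hxS, ht0, htτ⟩) _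
        have e3 : φ n x ≤ (E1 n).indicator (fun _ => (1:ℝ)) (x,t) := by
          by_cases hxL : x ∈ L n
          · rw [indicator_of_mem (by exact ⟨hxL, ht0, htτ⟩)]
            exact (hφ01 n x).2
          · rw [hφL n x hxL]
            exact indicator_nonneg (fun _ _ => zero_le_one) _
        simp only [hB, e1, e2]
        have h4 := hτ0 n
        have e4 : ψ n x ≤ (E1 n).indicator (fun _ => (1:ℝ)) (x,t) + δ n * 1 := by
          simp only [hψ]
          exact add_le_add e3 (mul_le_mul_of_nonneg_left (hχ01 x).2 (hδ0 n).le)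
        gcongr
      · have h1 : auxm (τ n) t = 0 := by
          refine max_eq_right ?_
          have := (one_le_div (hτ0 n)).2 (not_lt.1 htτ)
          linarith
        have := hB0 n (x,t)
        simpa [h1] using this
    · have h1 := hψS n x hxS
      have h2 := aux_lap_zero hS.isClosed hχS x hxS
      have h3 := aux_lap_zero (hL n).isClosed (hφL n) x (fun h => hxS (hLS n h))
      have := hB0 n (x,t)
      simpa [h1, h2, h3] using this
  have hupper : ∀ n, ∫ x, ψ n x ∂μ ≤ ∫ p in QT Ω T, B n p := by
    intro n
    have h1 := hsol _ (htest n)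
    have h2 : ∀ x, ψ n x * auxm (τ n) 0 ^ 2 = ψ n x := by
      intro x; simp [auxm]
    simp only [h2] at h1
    rw [← h1]
    by_cases hF : IntegrableOn (fun p : Euc N × ℝ =>
      -(u p) * deriv (fun t => ψ n p.1 * auxm (τ n) t ^ 2) p.2
        - u p * lap (fun y => ψ n y * auxm (τ n) p.2 ^ 2) p.1
        + ψ n p.1 * auxm (τ n) p.2 ^ 2 * g (u p)) (QT Ω T)
    · exact setIntegral_mono_on hF (hBi n) hQ (hpt n)
    · rw [integral_undef hF]
      exact integral_nonneg (hB0 n)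
  have hμS : μ S < ⊤ := hμ.2.1 S hSΩ hS
  have hμK : μ K < ⊤ := hμ.2.1 K hKΩ hK
  have hlower : ∀ n, μ.real K ≤ ∫ x, ψ n x ∂μ := by
    intro n
    have hi : Integrable (ψ n) μ := by
      rw [← integrableOn_iff_integrable_of_support_subset (s := S)]
      · refine Measure.integrableOn_of_bounded (M := 2) hμS.ne
          (hψc n).continuous.aestronglyMeasurable ?_
        refine Eventually.of_forall fun x => ?_
        rw [Real.norm_of_nonneg (hψ0 n x)]
        exact hψ2 n x
      · intro x hx
        by_contra h
        exact hx (hψS n x h)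
    have hKm := hK.isClosed.measurableSet
    have h1 : ∫ x, K.indicator (fun _ => (1:ℝ)) x ∂μ = μ.real K := by
      rw [integral_indicator hKm, setIntegral_const, smul_eq_mul, mul_one]
    rw [← h1]
    refine integral_mono ((integrable_indicator_iff hKm).2 (integrableOn_const hμK.ne)) hi ?_
    intro x
    by_cases hx : x ∈ K
    · simp only [indicator_of_mem hx, hψ, hφK n x hx]
      have := mul_nonneg (hδ0 n).le (hχ01 x).1
      linarith
    · simp only [indicator_of_notMem hx]
      exact hψ0 n x
  have hlim : Tendsto (fun n : ℕ => δ n * C * (∫ p in QT Ω T, |u p|) +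
      3 * (∫ p in QT Ω T, H n p) + 3 * (1 / ((n:ℝ) + 1)) * (1 + volume.real S)) atTop (𝓝 0) := by
    have h1 : Tendsto (fun n : ℕ => 1 / ((n:ℝ) + 1)) atTop (𝓝 0) :=
      tendsto_one_div_add_atTop_nhds_zero_nat
    have h2 : Tendsto δ atTop (𝓝 0) := by
      have := h1.pow 2
      simpa [hδ] using this
    have := (((h2.mul_const C).mul_const (∫ p in QT Ω T, |u p|)).add (hHlim.const_mul 3)).add
      ((h1.const_mul 3).mul_const (1 + volume.real S))
    simpa using this
  have hle : μ.real K ≤ 0 :=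
    ge_of_tendsto' hlim fun n => (hlower n).trans ((hupper n).trans (hBint n))
  have h0 : μ.real K = 0 := le_antisymm hle measureReal_nonneg
  rcases (ENNReal.toReal_eq_zero_iff _).1 h0 with h | h
  · exact h
  · exact absurd h hμK.ne

/-- **Theorem 2.23.** If `μ ∈ M¹₊(Ω)` is a good measure relative to every
continuous nondecreasing `g` vanishing on `(−∞,0]`, then `μ ∈ L¹_ρ(Ω)` :
`dμ = f dx` for some nonnegative `f` with `∫_Ω f ρ dx < ∞`. -/
theorem stmt_19 {N : ℕ} (hN : 1 ≤ N) (Ω : Set (Euc N)) (hΩo : IsOpen Ω)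
    (hΩc : IsConnected Ω) (hΩb : Bornology.IsBounded Ω) (T : ℝ) (hT : 0 < T)
    (μ : Measure (Euc N)) (hμ : MemM1 Ω μ)
    (hgood : ∀ g : ℝ → ℝ, GoodG g → GoodMeasure Ω T g μ) :
    ∃ f : Euc N → ℝ, Measurable f ∧ (∀ x, 0 ≤ f x) ∧
      IntegrableOn (fun x => f x * rho Ω x) Ω ∧
      μ = (volume.restrict Ω).withDensity (fun x => ENNReal.ofReal (f x)) := by
  obtain ⟨F, hFc, hFΩ, hFU, -⟩ := hΩo.exists_iUnion_isClosed
  have hFK : ∀ n, IsCompact (F n) := fun n =>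
    Metric.isCompact_of_isClosed_isBounded (hFc n) (hΩb.subset (hFΩ n))
  have hΩm := hΩo.measurableSet
  have hac : μ ≪ volume := by
    refine Measure.AbsolutelyContinuous.mk fun s hs hs0 => ?_
    have h1 : ∀ n, μ (s ∩ F n) = 0 := by
      intro n
      have hFm := (hFc n).measurableSet
      have : IsFiniteMeasure (μ.restrict (F n)) :=
        ⟨by rw [Measure.restrict_apply_univ]; exact hμ.2.1 _ (hFΩ n) (hFK n)⟩
      by_contra h
      have h2 : 0 < μ.restrict (F n) (s ∩ F n) := by
        rw [Measure.restrict_apply (hs.inter hFm), inter_assoc, inter_self]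
        exact pos_iff_ne_zero.2 h
      obtain ⟨K, hKs, hK, hK0⟩ := (hs.inter hFm).exists_lt_isCompact h2
      have h3 := aux_key hN Ω hΩo hΩb T hT μ hμ hgood K hK
        (hKs.trans (inter_subset_right.trans (hFΩ n)))
        (measure_mono_null (hKs.trans inter_subset_left) hs0)
      exact hK0.ne' (le_antisymm ((Measure.restrict_apply_le _ _).trans h3.le) bot_le)
    have h4 : s ⊆ (⋃ n, s ∩ F n) ∪ Ωᶜ := by
      intro x hx
      by_cases hxΩ : x ∈ Ω
      · left
        rw [← hFU] at hxΩ
        obtain ⟨n, hn⟩ := mem_iUnion.1 hxΩ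
        exact mem_iUnion.2 ⟨n, hx, hn⟩
      · exact Or.inr hxΩ
    exact measure_mono_null h4 (measure_union_null (measure_iUnion_null h1) hμ.1)
  have : SigmaFinite μ := by
    refine ⟨⟨⟨fun n => F n ∪ Ωᶜ, fun _ => mem_univ _, fun n => ?_, ?_⟩⟩⟩
    · refine (measure_union_le _ _).trans_lt ?_
      rw [hμ.1, add_zero]
      exact hμ.2.1 _ (hFΩ n) (hFK n)
    · rw [← iUnion_union, hFU, union_compl_self]
  have hd := Measure.withDensity_rnDeriv_eq μ volume hac
  have hfm : Measurable (μ.rnDeriv volume) := Measure.measurable_rnDeriv _ _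
  have hd2 : volume.withDensity (fun x => ENNReal.ofReal (μ.rnDeriv volume x).toReal) = μ := by
    rw [← hd]
    refine withDensity_congr_ae ?_
    rw [hd]
    filter_upwards [Measure.rnDeriv_lt_top μ volume] with x hx
    rw [ENNReal.ofReal_toReal hx.ne]
  have hres : μ.restrict Ω = μ :=
    Measure.restrict_eq_self_of_ae_mem (by rw [ae_iff]; exact hμ.1)
  have hd3 : μ = (volume.restrict Ω).withDensity
      (fun x => ENNReal.ofReal (μ.rnDeriv volume x).toReal) := by
    rw [← restrict_withDensity hΩm, hd2, hres]
  refine ⟨fun x => (μ.rnDeriv volume x).toReal, hfm.ennreal_toReal,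
    fun x => ENNReal.toReal_nonneg, ?_, hd3⟩
  have hrm : Measurable (rho Ω) := (Metric.continuous_infDist_pt _).measurable
  refine ⟨(hfm.ennreal_toReal.mul hrm).aestronglyMeasurable, ?_⟩
  have hnn : ∀ x, 0 ≤ (μ.rnDeriv volume x).toReal * rho Ω x := fun x =>
    mul_nonneg ENNReal.toReal_nonneg Metric.infDist_nonneg
  change HasFiniteIntegral (fun x => (μ.rnDeriv volume x).toReal * rho Ω x) (volume.restrict Ω)
  rw [hasFiniteIntegral_iff_ofReal (Eventually.of_forall hnn)]
  have h5 := hμ.2.2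
  rw [hd3, lintegral_withDensity_eq_lintegral_mul _ (by fun_prop) (by fun_prop)] at h5
  refine lt_of_le_of_lt (le_of_eq ?_) h5
  refine lintegral_congr fun x => ?_
  rw [Pi.mul_apply, ENNReal.ofReal_mul ENNReal.toReal_nonneg]
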